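/- arXiv:1710.06694 — 2 statements merged into one kernel-verified Lean document; each statement's English description precedes it below -/
import Mathlib

section
/- Let (W,T) be a finite dual Coxeter system of rank n and let w ∈ W with ℓ_T(w) = n. Then t ≤_T w for every reflection t ∈ T; equivalently, for every t ∈ T there exists a reduced reflection factorization of w beginning with t. -/
section Hurwitz

variable {G : Type*} [Group G]

/-- One Hurwitz move: replace two adjacent entries `(a, b)` by `(a * b * a⁻¹, a)`. -/
def HurwitzMove (l l' : List G) : Prop :=
  ∃ (u v : List G) (a b : G),
    l = u ++ a :: b :: v ∧ l' = u ++ (a * b * a⁻¹) :: a :: v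

/-- Hurwitz equivalence: two tuples are Hurwitz equivalent iff they lie in the same
orbit of the Hurwitz action of the braid group. -/
def HurwitzEquiv (l l' : List G) : Prop := Relation.EqvGen HurwitzMove l l'

/-- The reflection length `ℓ_T(w)` of `w` with respect to a generating set `T`. -/
noncomputable def reflLength (T : Set G) (w : G) : ℕ :=
  sInf {k | ∃ l : List G, (∀ t ∈ l, t ∈ T) ∧ l.prod = w ∧ l.length = k}

/-- `l` is a reduced `T`-factorization of `w`, i.e. an element of `Red_T(w)`. -/
def IsRedFac (T : Set G) (w : G) (l : List G) : Prop :=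
  (∀ t ∈ l, t ∈ T) ∧ l.prod = w ∧ l.length = reflLength T w

end Hurwitz


section DualCox

variable {W : Type*} [Group W]

/-- `(W,T)` is a dual Coxeter system: `T` is the set of reflections of some
Coxeter system on `W`. -/
def IsDualCoxeterSystem (W : Type*) [Group W] (T : Set W) : Prop :=
  ∃ (B : Type) (M : CoxeterMatrix B) (cs : CoxeterSystem M W),
    T = {t | cs.IsReflection t}

/-- `(W,T)` is a dual Coxeter system of rank `n`. -/
def IsDualCoxeterSystemOfRank (W : Type*) [Group W] (T : Set W) (n : ℕ) : Prop :=
  ∃ (B : Type) (M : CoxeterMatrix B) (cs : CoxeterSystem M W),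
    Nat.card B = n ∧ T = {t | cs.IsReflection t}

/-- `S ⊆ T` is a simple system for the dual Coxeter system `(W,T)`. -/
def IsSimpleSystem (T S : Set W) : Prop :=
  ∃ (B : Type) (M : CoxeterMatrix B) (cs : CoxeterSystem M W),
    S = Set.range cs.simple ∧ T = {t | cs.IsReflection t}

end DualCox

/-!
Let `W` act on its geometric representation, of dimension `n`. The stabiliser of a vector lying on
no reflecting hyperplane is trivial, so the fixed space of an element `w ≠ 1` lies in the hyperplane
of some reflection `t`. With respect to an invariant inner product, multiplying `w` by such a `t`
strictly enlarges the fixed space. Iterating, `ℓ_T(w) + dim Fix w ≤ n` (Carter). If `ℓ_T(w) = n`,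
then `Fix w = 0` lies in every reflecting hyperplane, so `Fix (t w) ≠ 0` and `ℓ_T(t w) < n` for
every reflection `t`.
-/

section ReflectionLength

variable {G : Type*} [Group G] {T : Set G} {t w : G} {l : List G}

lemma reflLength_prod_le (hl : ∀ t ∈ l, t ∈ T) : reflLength T l.prod ≤ l.length :=
  Nat.sInf_le ⟨l, hl, rfl, rfl⟩

lemma reflLength_one : reflLength T (1 : G) = 0 :=
  Nat.le_zero.mp (reflLength_prod_le (l := []) (by simp))

lemma reflLength_le_one (ht : t ∈ T) : reflLength T t ≤ 1 := by
  simpa using reflLength_prod_le (l := [t]) (by simpa using ht)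

lemma exists_isRedFac (hw : w ∈ Submonoid.closure T) : ∃ l, IsRedFac T w l := by
  obtain ⟨l, hl, hprod⟩ := Submonoid.exists_list_of_mem_closure hw
  exact Nat.sInf_mem (s := {k | ∃ l : List G, (∀ t ∈ l, t ∈ T) ∧ l.prod = w ∧ l.length = k})
    ⟨l.length, l, hl, hprod, rfl⟩

lemma reflLength_mul_le {x y : G} (hx : x ∈ Submonoid.closure T) (hy : y ∈ Submonoid.closure T) :
    reflLength T (x * y) ≤ reflLength T x + reflLength T y := by
  obtain ⟨k, hk, hk_prod, hk_length⟩ := exists_isRedFac hx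
  obtain ⟨l, hl, hl_prod, hl_length⟩ := exists_isRedFac hy
  have hkl : ∀ t ∈ k ++ l, t ∈ T := fun t ht ↦ (List.mem_append.mp ht).elim (hk t) (hl t)
  simpa [hk_prod, hl_prod, hk_length, hl_length] using reflLength_prod_le hkl

lemma reflLength_add_reflLength_inv_mul (ht : t ∈ T) (hw : t⁻¹ * w ∈ Submonoid.closure T)
    (hlt : reflLength T (t⁻¹ * w) < reflLength T w) :
    reflLength T t + reflLength T (t⁻¹ * w) = reflLength T w := by
  have hle := reflLength_mul_le (Submonoid.subset_closure ht) hw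
  rw [mul_inv_cancel_left] at hle
  have := reflLength_le_one ht
  omega

lemma isRedFac_cons (ht : t ∈ T) (hl : IsRedFac T (t⁻¹ * w) l)
    (hlt : reflLength T (t⁻¹ * w) < reflLength T w) : IsRedFac T w (t :: l) := by
  obtain ⟨hmem, hprod, hlength⟩ := hl
  have hmem' : ∀ x ∈ t :: l, x ∈ T := List.forall_mem_cons.mpr ⟨ht, hmem⟩
  have hprod' : (t :: l).prod = w := by rw [List.prod_cons, hprod, mul_inv_cancel_left]
  refine ⟨hmem', hprod', le_antisymm ?_ (hprod' ▸ reflLength_prod_le hmem')⟩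
  rw [List.length_cons, hlength]
  exact hlt

end ReflectionLength

section Reflection

open Module

variable {R V : Type*} [CommRing R] [AddCommGroup V] [Module R V] {Φ : LinearMap.BilinForm R V}
  {α : V} {f : Dual R V}

lemma ne_zero_of_apply_eq_two [NeZero (2 : R)] (h : f α = 2) : α ≠ 0 := by
  rintro rfl
  exact two_ne_zero (h.symm.trans (map_zero f))

lemma fixedSubmodule_reflection [NeZero (2 : R)] [IsDomain R] [Module.IsTorsionFree R V]
    (h : f α = 2) : (reflection h).fixedSubmodule = LinearMap.ker f := by
  ext x
  simp [reflection_apply, ne_zero_of_apply_eq_two h]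

lemma two_mul_apply_eq_of_reflection_invariant (h : f α = 2)
    (hs : ∀ x y, Φ (reflection h x) (reflection h y) = Φ x y) (x : V) :
    2 * Φ α x = f x * Φ α α := by
  have := hs α x
  simp only [reflection_apply_self, reflection_apply, map_neg, map_sub, map_smul,
    LinearMap.neg_apply, smul_eq_mul] at this
  linear_combination -this

lemma apply_reflection_reflection (hΦ : Φ.IsSymm) (h : Φ α α = 2) (x y : V) :
    Φ (reflection h x) (reflection h y) = Φ x y := by
  simp only [reflection_apply, map_sub, map_smul, LinearMap.sub_apply, LinearMap.smul_apply,
    smul_eq_mul, h, hΦ.eq x α]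
  ring

lemma conj_reflection {g : V ≃ₗ[R] V} (hg : ∀ x y, Φ (g x) (g y) = Φ x y) (h : Φ α α = 2) :
    g * reflection h * g⁻¹ = reflection ((hg α α).trans h) := by
  ext x
  have hgx : g (g⁻¹ x) = x := g.apply_symm_apply x
  have hΦ : Φ (g α) x = Φ α (g⁻¹ x) := by rw [← hg α, hgx]
  simp [reflection_apply, hΦ]

end Reflection

section InvariantForm

open Module

variable {K V : Type*} [Field K] [AddCommGroup V] [Module K V]

lemma mem_range_sub_one_of_orthogonal_fixed [FiniteDimensional K V] {Φ : LinearMap.BilinForm K V}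
    (hΦ : ∀ x, Φ x x = 0 → x = 0) {g : End K V} (hg : ∀ x y, Φ (g x) (g y) = Φ x y) {α : V}
    (hα : ∀ x ∈ g.fixedSubmodule, Φ α x = 0) : α ∈ LinearMap.range (g - 1) := by
  have horth : ∀ y ∈ LinearMap.range (g - 1), ∀ x ∈ g.fixedSubmodule, Φ y x = 0 := by
    rintro _ ⟨v, rfl⟩ x hx
    have := hg v x
    rw [LinearMap.mem_fixedSubmodule_iff.mp hx] at this
    simp [this]
  have hdisj : Disjoint (LinearMap.range (g - 1)) g.fixedSubmodule :=
    Submodule.disjoint_def.mpr fun x hx hx' ↦ hΦ x (horth x hx x hx')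
  have htop : LinearMap.range (g - 1) ⊔ g.fixedSubmodule = ⊤ := by
    refine Submodule.eq_top_of_disjoint _ _ (Eq.ge ?_) hdisj
    rw [LinearMap.fixedSubmodule_eq_ker]
    exact LinearMap.finrank_range_add_finrank_ker (g - 1)
  obtain ⟨y, hy, x, hx, rfl⟩ := Submodule.mem_sup.mp (htop ▸ Submodule.mem_top : α ∈ _)
  have hx0 : x = 0 := hΦ x (by simpa [horth y hy x hx] using hα x hx)
  rwa [hx0, add_zero]

variable [LinearOrder K] [IsStrictOrderedRing K]

lemma exists_invariant_posDef_bilinForm {G : Type*} [Group G] [Finite G] [FiniteDimensional K V]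
    (ρ : G →* V ≃ₗ[K] V) :
    ∃ Φ : LinearMap.BilinForm K V, Φ.IsSymm ∧ (∀ x ≠ 0, 0 < Φ x x) ∧
      ∀ g x y, Φ (ρ g x) (ρ g y) = Φ x y := by
  have := Fintype.ofFinite G
  let b := finBasis K V
  let Φ : LinearMap.BilinForm K V := ∑ g, ∑ i,
    LinearMap.BilinForm.linMulLin (b.coord i ∘ₗ (ρ g).toLinearMap) (b.coord i ∘ₗ (ρ g).toLinearMap)
  have hΦ (x y : V) : Φ x y = ∑ g, ∑ i, b.repr (ρ g x) i * b.repr (ρ g y) i := by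
    simp [Φ, LinearMap.sum_apply]
  refine ⟨Φ, ⟨fun x y ↦ ?_⟩, fun x hx ↦ ?_, fun g x y ↦ ?_⟩
  · simp only [hΦ, mul_comm]
  · obtain ⟨i, hi⟩ : ∃ i, b.repr x i ≠ 0 := by
      by_contra! h
      exact hx (b.ext_elem fun i ↦ by simp [h i])
    have hsum (g : G) : 0 ≤ ∑ i, b.repr (ρ g x) i * b.repr (ρ g x) i :=
      Finset.sum_nonneg fun i _ ↦ mul_self_nonneg _
    rw [hΦ]
    refine Finset.sum_pos' (fun g _ ↦ hsum g) ⟨1, Finset.mem_univ _, ?_⟩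
    refine Finset.sum_pos' (fun i _ ↦ mul_self_nonneg _) ⟨i, Finset.mem_univ _, ?_⟩
    simpa using mul_self_pos.mpr hi
  · simp only [hΦ, ← LinearEquiv.mul_apply, ← map_mul]
    exact Fintype.sum_equiv (Equiv.mulRight g) _ _ fun _ ↦ rfl

-- If `g v - v = α`, the reflection in `α` sends `g v` back to `v`, because `v` and `g v` have the
-- same norm.
lemma fixedSubmodule_lt_fixedSubmodule_reflection_mul [FiniteDimensional K V]
    {Φ : LinearMap.BilinForm K V} (hsymm : Φ.IsSymm) (hpos : ∀ x ≠ 0, 0 < Φ x x)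
    {α : V} {f : Dual K V} (h : f α = 2)
    (hs : ∀ x y, Φ (reflection h x) (reflection h y) = Φ x y)
    {g : V ≃ₗ[K] V} (hg : ∀ x y, Φ (g x) (g y) = Φ x y)
    (hle : g.fixedSubmodule ≤ (reflection h).fixedSubmodule) :
    g.fixedSubmodule < (reflection h * g).fixedSubmodule := by
  have hα0 := ne_zero_of_apply_eq_two h
  have hαα := hpos α hα0
  have hΦα := two_mul_apply_eq_of_reflection_invariant h hs
  rw [fixedSubmodule_reflection] at hle
  obtain ⟨v, hv⟩ : α ∈ LinearMap.range (g.toLinearMap - 1) := by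
    have hΦ (x : V) (hx : Φ x x = 0) : x = 0 := by
      by_contra hx0
      exact (hpos x hx0).ne' hx
    refine mem_range_sub_one_of_orthogonal_fixed hΦ hg fun x hx ↦ ?_
    have hfx : f x = 0 := hle hx
    simpa [hfx] using hΦα x
  have hgv : g v = v + α := by
    rw [← hv]
    simp
  have hfv : f (g v) = 1 := by
    have hnorm := hg v v
    have hΦgv := hΦα (g v)
    rw [hgv] at hnorm hΦgv ⊢
    simp only [map_add, LinearMap.add_apply, hsymm.eq α v] at hnorm hΦgv ⊢
    refine mul_right_cancel₀ hαα.ne' ?_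
    linarith
  refine SetLike.lt_iff_le_and_exists.mpr ⟨fun x hx ↦ ?_, v, ?_, ?_⟩
  · have hfx : f x = 0 := hle hx
    have hgx : g x = x := hx
    simp [hgx, reflection_apply, hfx]
  · rw [LinearMap.mem_fixedSubmodule_iff]
    change reflection h (g v) = v
    rw [reflection_apply, hfv, hgv, one_smul, add_sub_cancel_right]
  · simpa [hgv] using hα0

end InvariantForm

section Dihedral

open Module Polynomial.Chebyshev

lemma chebyshevS_eval_two_mul_cos_pi_div_nonneg {m : ℕ} (hm : m ≠ 1) {n : ℤ} (hn : -1 ≤ n)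
    (hnm : m ≠ 0 → n < m) : 0 ≤ (S ℝ n).eval (2 * Real.cos (Real.pi / m)) := by
  have hn' : (0 : ℝ) ≤ n + 1 := by exact_mod_cast (by lia : 0 ≤ n + 1)
  rcases eq_or_ne m 0 with rfl | hm0
  · simpa using hn'
  have hm2 : (2 : ℝ) ≤ m := by exact_mod_cast (by lia : 2 ≤ m)
  have hnm' : (n + 1 : ℝ) ≤ m := by exact_mod_cast Int.add_one_le_of_lt (hnm hm0)
  have hsin : 0 < Real.sin (Real.pi / m) :=
    Real.sin_pos_of_pos_of_lt_pi (by positivity) (div_lt_self Real.pi_pos (by linarith))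
  refine nonneg_of_mul_nonneg_left ?_ hsin
  rw [S_two_mul_real_cos]
  refine Real.sin_nonneg_of_nonneg_of_le_pi (by positivity) ?_
  calc (n + 1) * (Real.pi / m) ≤ m * (Real.pi / m) := by gcongr
    _ = Real.pi := by field_simp

lemma chebyshevS_sub_one_eval_two_mul_cos_pi_div_eq_zero {k : ℕ} (hk : 2 ≤ k) :
    (S ℝ (k - 1)).eval (2 * Real.cos (Real.pi / k)) = 0 := by
  have hk2 : (2 : ℝ) ≤ k := by exact_mod_cast hk
  have hsin : 0 < Real.sin (Real.pi / k) :=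
    Real.sin_pos_of_pos_of_lt_pi (by positivity) (div_lt_self Real.pi_pos (by linarith))
  refine (mul_eq_zero.mp ?_).resolve_right hsin.ne'
  rw [S_two_mul_real_cos]
  have : ((k - 1 : ℤ) + 1 : ℝ) * (Real.pi / k) = Real.pi := by
    push_cast
    field_simp
    ring
  rw [this, Real.sin_pi]

lemma chebyshevS_eval_add_sub_one_eval_eq_zero {k : ℕ} (hk : 1 ≤ k) :
    (S ℝ k).eval (2 * Real.cos (2 * Real.pi / (2 * k + 1))) +
      (S ℝ (k - 1)).eval (2 * Real.cos (2 * Real.pi / (2 * k + 1))) = 0 := by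
  have hk1 : (1 : ℝ) ≤ k := by exact_mod_cast hk
  have hsin : 0 < Real.sin (2 * Real.pi / (2 * k + 1)) := by
    refine Real.sin_pos_of_pos_of_lt_pi (by positivity) ?_
    rw [div_lt_iff₀ (by positivity)]
    nlinarith [Real.pi_pos]
  refine (mul_eq_zero.mp ?_).resolve_right hsin.ne'
  rw [add_mul, S_two_mul_real_cos, S_two_mul_real_cos]
  have hsum : ((k : ℤ) + 1 : ℝ) * (2 * Real.pi / (2 * k + 1)) =
      2 * Real.pi - ((k - 1 : ℤ) + 1 : ℝ) * (2 * Real.pi / (2 * k + 1)) := by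
    push_cast
    field_simp
    ring
  rw [hsum, Real.sin_two_pi_sub, neg_add_cancel]

lemma reflection_mul_reflection_pow_eq_one {V : Type*} [AddCommGroup V] [Module ℝ V] {x y : V}
    {f g : Dual ℝ V} (hf : f x = 2) (hg : g y = 2) {m : ℕ} (hm : 2 ≤ m)
    (hfy : f y = -2 * Real.cos (Real.pi / m)) (hgx : g x = -2 * Real.cos (Real.pi / m)) :
    (reflection hf * reflection hg) ^ m = 1 := by
  have ht : 2 * Real.cos (2 * Real.pi / m) = f y * g x - 2 := by
    rw [hfy, hgx, mul_div_assoc, Real.cos_two_mul]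
    ring
  ext z
  obtain ⟨k, rfl | rfl⟩ := m.even_or_odd'
  · rcases (by lia : k = 1 ∨ 2 ≤ k) with rfl | hk
    · have hfy0 : f y = 0 := by simp [hfy]
      have hgx0 : g x = 0 := by simp [hgx]
      simp only [mul_one, pow_two, LinearEquiv.mul_apply, reflection_apply, map_sub, map_smul, hf,
        hg, hfy0, hgx0, LinearEquiv.coe_one, id_eq]
      module
    · have hS : (S ℝ (k - 1)).eval (2 * Real.cos (2 * Real.pi / (2 * k : ℕ))) = 0 := by
        push_cast
        rw [mul_div_mul_left _ _ two_ne_zero]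
        exact chebyshevS_sub_one_eval_two_mul_cos_pi_div_eq_zero hk
      have h₁ : (((2 * k : ℕ) : ℤ) - 1) / 2 = k - 1 := by lia
      have h₂ : (((2 * k : ℕ) : ℤ) - 2) / 2 = k - 1 := by lia
      rw [reflection_mul_reflection_pow_apply hf hg _ z _ ht, h₁, h₂, hS]
      simp
  · have hS := chebyshevS_eval_add_sub_one_eval_eq_zero (k := k) (by lia)
    have h₀ : ((2 * k + 1 : ℕ) : ℤ) / 2 = k := by lia
    have h₁ : (((2 * k + 1 : ℕ) : ℤ) - 1) / 2 = k := by lia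
    have h₂ : (((2 * k + 1 : ℕ) : ℤ) - 2) / 2 = k - 1 := by lia
    have h₃ : (((2 * k + 1 : ℕ) : ℤ) - 3) / 2 = k - 1 := by lia
    rw [reflection_mul_reflection_pow_apply hf hg _ z _ ht, h₀, h₁, h₂, h₃]
    simp [hS]

end Dihedral

section GeometricRepresentation

open Module CoxeterSystem Polynomial.Chebyshev

variable {B W : Type*} [Group W] {M : CoxeterMatrix B}

/-- The simple root `αᵢ`: a basis vector of the geometric representation, whose underlying space is
`B →₀ ℝ`. -/
noncomputable def simpleRoot (i : B) : B →₀ ℝ := Finsupp.single i 1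

/-- The symmetric bilinear form preserved by the geometric representation. It is twice the usual
one, so that a root `α` satisfies `⟪α, α⟫ = 2` and the reflection in `α` is `x ↦ x - ⟪α, x⟫ α`.
If `M i j = 0`, i.e. `sᵢ sⱼ` has infinite order, then `π / M i j = 0` gives the correct value
`⟪αᵢ, αⱼ⟫ = -2`. -/
noncomputable def coxeterForm (M : CoxeterMatrix B) : LinearMap.BilinForm ℝ (B →₀ ℝ) :=
  Finsupp.linearCombination ℝ fun i ↦ Finsupp.linearCombination ℝ fun j ↦
    -2 * Real.cos (Real.pi / M i j)

lemma coxeterForm_simpleRoot (i j : B) :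
    coxeterForm M (simpleRoot i) (simpleRoot j) = -2 * Real.cos (Real.pi / M i j) := by
  simp [coxeterForm, simpleRoot]

lemma coxeterForm_simpleRoot_self (i : B) :
    coxeterForm M (simpleRoot i) (simpleRoot i) = 2 := by
  simp [coxeterForm_simpleRoot]

lemma isSymm_coxeterForm : (coxeterForm M).IsSymm := by
  have hflip : (coxeterForm M).flip = coxeterForm M := by
    ext i j
    simp [coxeterForm, M.symmetric i j]
  exact ⟨fun x y ↦ LinearMap.congr_fun₂ hflip y x⟩

lemma isLiftable_reflection_simpleRoot :
    M.IsLiftable fun i ↦ reflection (coxeterForm_simpleRoot_self (M := M) i) := by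
  intro i j
  rcases eq_or_ne i j with rfl | hij
  · rw [M.diagonal, pow_one]
    exact mul_eq_one_iff_eq_inv.mpr (reflection_inv _).symm
  · rcases eq_or_ne (M i j) 0 with h0 | h0
    · rw [h0, pow_zero]
    · have := M.off_diagonal i j hij
      refine reflection_mul_reflection_pow_eq_one _ _ (by lia) (coxeterForm_simpleRoot i j) ?_
      rw [coxeterForm_simpleRoot, M.symmetric]

/-- The geometric representation of a Coxeter group: each simple reflection acts as the reflection
in its simple root. -/
noncomputable def geometricRep (cs : CoxeterSystem M W) : W →* (B →₀ ℝ) ≃ₗ[ℝ] (B →₀ ℝ) :=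
  cs.lift ⟨_, isLiftable_reflection_simpleRoot⟩

variable (cs : CoxeterSystem M W)

lemma geometricRep_simple (i : B) :
    geometricRep cs (cs.simple i) = reflection (coxeterForm_simpleRoot_self (M := M) i) :=
  cs.lift_apply_simple _ i

lemma geometricRep_simple_apply (i : B) (x : B →₀ ℝ) :
    geometricRep cs (cs.simple i) x = x - coxeterForm M (simpleRoot i) x • simpleRoot i := by
  rw [geometricRep_simple, reflection_apply]

lemma geometricRep_simple_simpleRoot (i : B) :
    geometricRep cs (cs.simple i) (simpleRoot i) = -simpleRoot i := by
  rw [geometricRep_simple, reflection_apply_self]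

lemma coxeterForm_geometricRep (w : W) (x y : B →₀ ℝ) :
    coxeterForm M (geometricRep cs w x) (geometricRep cs w y) = coxeterForm M x y := by
  induction w using cs.simple_induction generalizing x y with
  | simple i =>
    rw [geometricRep_simple, apply_reflection_reflection isSymm_coxeterForm]
  | one => simp
  | mul w w' hw hw' => rw [map_mul, LinearEquiv.mul_apply, LinearEquiv.mul_apply, hw, hw']

lemma coxeterForm_geometricRep_simpleRoot_self (w : W) (i : B) :
    coxeterForm M (geometricRep cs w (simpleRoot i)) (geometricRep cs w (simpleRoot i)) = 2 :=
  (coxeterForm_geometricRep cs w _ _).trans (coxeterForm_simpleRoot_self i)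

lemma geometricRep_conj_simple (w : W) (i : B) :
    geometricRep cs (w * cs.simple i * w⁻¹) =
      reflection (coxeterForm_geometricRep_simpleRoot_self cs w i) := by
  rw [map_mul, map_mul, map_inv, geometricRep_simple,
    conj_reflection (coxeterForm_geometricRep cs w)]

lemma exists_geometricRep_eq_reflection {t : W} (ht : cs.IsReflection t) :
    ∃ (α : B →₀ ℝ) (h : coxeterForm M α α = 2), geometricRep cs t = reflection h := by
  obtain ⟨w, i, rfl⟩ := ht
  exact ⟨_, _, geometricRep_conj_simple cs w i⟩

lemma coxeterSystem_simple_injective : Function.Injective cs.simple := by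
  intro i j hij
  by_contra hne
  have h := geometricRep_simple_simpleRoot cs i
  rw [hij, geometricRep_simple_apply] at h
  have hcoord : (1 : ℝ) = -1 := by
    simpa [simpleRoot, Ne.symm hne] using DFunLike.congr_fun h i
  norm_num at hcoord

lemma finite_of_coxeterSystem [Finite W] (cs : CoxeterSystem M W) : Finite B :=
  Finite.of_injective _ (coxeterSystem_simple_injective cs)

lemma geometricRep_alternatingWord_simpleRoot (i j : B) (k : ℕ) :
    geometricRep cs (cs.wordProd (alternatingWord i j k)) (simpleRoot i) =
      (S ℝ (if Even k then k else k - 1)).eval (2 * Real.cos (Real.pi / M i j)) • simpleRoot i +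
      (S ℝ (if Even k then k - 1 else k)).eval (2 * Real.cos (Real.pi / M i j)) • simpleRoot j := by
  have hij : coxeterForm M (simpleRoot i) (simpleRoot j) = -2 * Real.cos (Real.pi / M i j) :=
    coxeterForm_simpleRoot i j
  have hji : coxeterForm M (simpleRoot j) (simpleRoot i) = -2 * Real.cos (Real.pi / M i j) := by
    rw [coxeterForm_simpleRoot, M.symmetric]
  induction k with
  | zero => simp [alternatingWord]
  | succ k ih =>
    rw [alternatingWord_succ', cs.wordProd_cons, map_mul, LinearEquiv.mul_apply, ih]
    by_cases hk : Even k <;>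
    · simp only [hk, Nat.even_add_one, not_true, not_false_iff, if_true, if_false, map_add,
        map_smul, geometricRep_simple_apply, coxeterForm_simpleRoot_self, hij, hji,
        Nat.cast_add_one, S_add_one, add_sub_cancel_right, Polynomial.eval_sub,
        Polynomial.eval_mul, Polynomial.eval_X]
      module

lemma exists_eq_mul_wordProd_alternatingWord {w : W} {i : B} (hi : ¬cs.IsRightDescent w i) (j : B) :
    ∃ v k, w = v * cs.wordProd (alternatingWord i j k) ∧ cs.length w = cs.length v + k ∧
      ¬cs.IsRightDescent v i ∧ ¬cs.IsRightDescent v j := by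
  induction hn : cs.length w using Nat.strong_induction_on generalizing w i j with
  | _ n ih =>
  subst hn
  by_cases hj : cs.IsRightDescent w j
  · have hlt : cs.length (w * cs.simple j) < cs.length w := hj
    have hlength := cs.isRightDescent_iff.mp hj
    have hj' : ¬cs.IsRightDescent (w * cs.simple j) j :=
      cs.isRightDescent_iff_not_isRightDescent_mul.mp hj
    obtain ⟨v, k, hw, hk, hvj, hvi⟩ := ih _ hlt hj' i rfl
    refine ⟨v, k + 1, ?_, by lia, hvi, hvj⟩
    rw [alternatingWord_succ, cs.wordProd_concat, ← mul_assoc, ← hw,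
      cs.simple_mul_simple_cancel_right]
  · exact ⟨w, 0, by simp [alternatingWord], rfl, hi, hj⟩

lemma lt_of_length_mul_wordProd_alternatingWord {v : W} {i j : B} {k : ℕ} (hM : M i j ≠ 0)
    (hi : ¬cs.IsRightDescent (v * cs.wordProd (alternatingWord i j k)) i)
    (hk : cs.length (v * cs.wordProd (alternatingWord i j k)) = cs.length v + k) :
    k < M i j := by
  by_contra! hle
  have hred := cs.not_isReduced_alternatingWord j i (m := k + 1) (M.symmetric i j ▸ hM)
    (by rw [M.symmetric]; lia)
  have hlt := (cs.length_wordProd_le _).lt_of_ne hred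
  have hlength := cs.not_isRightDescent_iff.mp hi
  rw [mul_assoc, ← cs.wordProd_concat, ← alternatingWord_succ] at hlength
  have := cs.length_mul_le v (cs.wordProd (alternatingWord j i (k + 1)))
  rw [length_alternatingWord] at hlt
  lia

lemma simpleRoot_nonneg (i : B) : 0 ≤ simpleRoot i :=
  Finsupp.single_nonneg.mpr zero_le_one

lemma geometricRep_simpleRoot_nonneg {w : W} {i : B} (hi : ¬cs.IsRightDescent w i) :
    0 ≤ geometricRep cs w (simpleRoot i) := by
  induction hn : cs.length w using Nat.strong_induction_on generalizing w i with
  | _ n ih =>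
  subst hn
  rcases eq_or_ne w 1 with rfl | hw
  · simpa using simpleRoot_nonneg i
  obtain ⟨j, hj⟩ := cs.exists_rightDescent_of_ne_one hw
  obtain ⟨v, k, rfl, hk, hvi, hvj⟩ := exists_eq_mul_wordProd_alternatingWord cs hi j
  have hk1 : k ≠ 0 := by
    rintro rfl
    simp [alternatingWord, hvj] at hj
  have hij : i ≠ j := by
    rintro rfl
    exact hi hj
  have hα := ih _ (by lia) hvi rfl
  have hβ := ih _ (by lia) hvj rfl
  rw [map_mul, LinearEquiv.mul_apply, geometricRep_alternatingWord_simpleRoot, map_add, map_smul,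
    map_smul]
  have hkM (h : M i j ≠ 0) : k < M i j := lt_of_length_mul_wordProd_alternatingWord cs h hi hk
  refine add_nonneg (smul_nonneg ?_ hα) (smul_nonneg ?_ hβ) <;>
  refine chebyshevS_eval_two_mul_cos_pi_div_nonneg (M.off_diagonal i j hij) ?_ ?_ <;>
  grind

lemma geometricRep_simpleRoot_nonpos {w : W} {i : B} (hi : cs.IsRightDescent w i) :
    geometricRep cs w (simpleRoot i) ≤ 0 := by
  have := geometricRep_simpleRoot_nonneg cs (cs.isRightDescent_iff_not_isRightDescent_mul.mp hi)
  rwa [map_mul, LinearEquiv.mul_apply, geometricRep_simple_simpleRoot, map_neg,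
    Left.nonneg_neg_iff] at this

end GeometricRepresentation

section Stabilizer

open Module

variable {B W : Type*} [Group W] {M : CoxeterMatrix B} (cs : CoxeterSystem M W)

lemma apply_nonneg_of_apply_simpleRoot_nonneg {f : Dual ℝ (B →₀ ℝ)}
    (hf : ∀ i, 0 ≤ f (simpleRoot i)) {x : B →₀ ℝ} (hx : 0 ≤ x) : 0 ≤ f x := by
  have hsum : f x = x.sum fun i c ↦ c * f (simpleRoot i) := by
    conv_lhs => rw [← Finsupp.sum_single x, map_finsuppSum]
    refine Finsupp.sum_congr fun i _ ↦ ?_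
    rw [simpleRoot, ← smul_eq_mul, ← map_smul, Finsupp.smul_single_one]
  rw [hsum]
  exact Finsupp.sum_nonneg fun i _ ↦ mul_nonneg (hx i) (hf i)

lemma eq_one_of_geometricRep_apply_eq_self {w : W} {y : B →₀ ℝ}
    (hy : ∀ i, 0 < coxeterForm M (simpleRoot i) y) (hw : geometricRep cs w y = y) : w = 1 := by
  by_contra hne
  obtain ⟨i, hi⟩ := cs.exists_rightDescent_of_ne_one hne
  have hneg : 0 ≤ coxeterForm M (-geometricRep cs w (simpleRoot i)) y :=
    apply_nonneg_of_apply_simpleRoot_nonneg (f := (coxeterForm M).flip y) (fun j ↦ (hy j).le)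
      (neg_nonneg.mpr (geometricRep_simpleRoot_nonpos cs hi))
  have hpos := hy i
  rw [← coxeterForm_geometricRep cs w, hw] at hpos
  rw [map_neg, LinearMap.neg_apply] at hneg
  linarith

-- Choose `u x` with maximal coordinate sum: applying `sᵢ` decreases that sum by `⟪αᵢ, u x⟫`.
lemma exists_coxeterForm_simpleRoot_nonneg [Finite W] (x : B →₀ ℝ) :
    ∃ u, ∀ i, 0 ≤ coxeterForm M (simpleRoot i) (geometricRep cs u x) := by
  obtain ⟨u, hu⟩ := Finite.exists_max fun u ↦ Finsupp.degree (geometricRep cs u x)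
  refine ⟨u, fun i ↦ ?_⟩
  have := hu (cs.simple i * u)
  rw [map_mul, LinearEquiv.mul_apply, geometricRep_simple_apply] at this
  simpa [simpleRoot] using this

lemma eq_one_of_geometricRep_apply_eq_self_of_ne_zero [Finite W] {w : W} {x : B →₀ ℝ}
    (hx : ∀ u i, coxeterForm M (geometricRep cs u (simpleRoot i)) x ≠ 0)
    (hw : geometricRep cs w x = x) : w = 1 := by
  obtain ⟨u, hu⟩ := exists_coxeterForm_simpleRoot_nonneg cs x
  have hpos (i : B) : 0 < coxeterForm M (simpleRoot i) (geometricRep cs u x) := by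
    refine (hu i).lt_of_ne' ?_
    have := hx u⁻¹ i
    rwa [← coxeterForm_geometricRep cs u, ← LinearEquiv.mul_apply, ← map_mul, mul_inv_cancel,
      map_one] at this
  have hconj : geometricRep cs (u * w * u⁻¹) (geometricRep cs u x) = geometricRep cs u x := by
    rw [← LinearEquiv.mul_apply, ← map_mul, inv_mul_cancel_right, map_mul, LinearEquiv.mul_apply,
      hw]
  exact (conj_eq_one_iff).mp (eq_one_of_geometricRep_apply_eq_self cs hpos hconj)

-- If no reflecting hyperplane contains the fixed space of `w`, that space is not covered by the
-- finitely many hyperplanes, and a point of it off all of them has trivial stabiliser.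
lemma exists_fixedSubmodule_le_fixedSubmodule_isReflection [Finite W] {w : W} (hw : w ≠ 1) :
    ∃ t, cs.IsReflection t ∧
      (geometricRep cs w).fixedSubmodule ≤ (geometricRep cs t).fixedSubmodule := by
  have := finite_of_coxeterSystem cs
  by_contra! h
  have hroot (p : W × B) : ∃ x ∈ (geometricRep cs w).fixedSubmodule,
      coxeterForm M (geometricRep cs p.1 (simpleRoot p.2)) x ≠ 0 := by
    obtain ⟨u, i⟩ := p
    obtain ⟨x, hx, hxt⟩ := SetLike.not_le_iff_exists.mp
      (h (u * cs.simple i * u⁻¹) ⟨u, i, rfl⟩)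
    refine ⟨x, hx, fun h0 ↦ hxt ?_⟩
    rwa [geometricRep_conj_simple, fixedSubmodule_reflection, LinearMap.mem_ker]
  obtain ⟨x, hx, hxne⟩ := Dual.exists_forall_mem_ne_zero_of_forall_exists _ _ hroot
  exact hw (eq_one_of_geometricRep_apply_eq_self_of_ne_zero cs (fun u i ↦ hxne (u, i)) hx)

end Stabilizer

section Carter

open Module

variable {B W : Type*} [Group W] {M : CoxeterMatrix B} (cs : CoxeterSystem M W)

lemma mem_closure_isReflection (w : W) : w ∈ Submonoid.closure {t | cs.IsReflection t} := by
  have hsub : Set.range cs.simple ⊆ {t | cs.IsReflection t} :=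
    Set.range_subset_iff.mpr cs.isReflection_simple
  exact Submonoid.closure_mono hsub (cs.submonoid_closure_range_simple ▸ Submonoid.mem_top w)

variable [Finite W]

lemma fixedSubmodule_lt_fixedSubmodule_isReflection_mul {w t : W} (ht : cs.IsReflection t)
    (hle : (geometricRep cs w).fixedSubmodule ≤ (geometricRep cs t).fixedSubmodule) :
    (geometricRep cs w).fixedSubmodule < (geometricRep cs (t * w)).fixedSubmodule := by
  have := finite_of_coxeterSystem cs
  obtain ⟨Φ, hsymm, hpos, hinv⟩ := exists_invariant_posDef_bilinForm (geometricRep cs)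
  obtain ⟨α, h, hα⟩ := exists_geometricRep_eq_reflection cs ht
  rw [map_mul]
  have hs := hinv t
  rw [hα] at hle hs ⊢
  exact fixedSubmodule_lt_fixedSubmodule_reflection_mul hsymm hpos h hs (hinv w) hle

-- One half of Carter's lemma, according to which equality holds.
lemma reflLength_add_finrank_fixedSubmodule_le (w : W) :
    reflLength {t | cs.IsReflection t} w + finrank ℝ (geometricRep cs w).fixedSubmodule ≤
      Nat.card B := by
  have := finite_of_coxeterSystem cs
  have := Fintype.ofFinite B
  have hle (u : W) : finrank ℝ (geometricRep cs u).fixedSubmodule ≤ Nat.card B := by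
    simpa using Submodule.finrank_le (geometricRep cs u).fixedSubmodule
  induction hn : Nat.card B - finrank ℝ (geometricRep cs w).fixedSubmodule
    using Nat.strong_induction_on generalizing w with
  | _ n ih =>
  rcases eq_or_ne w 1 with rfl | hw
  · simpa [reflLength_one] using hle 1
  obtain ⟨t, ht, hfix⟩ := exists_fixedSubmodule_le_fixedSubmodule_isReflection cs hw
  have hlt := Submodule.finrank_lt_finrank_of_lt
    (fixedSubmodule_lt_fixedSubmodule_isReflection_mul cs ht hfix)
  have hind := ih _ (by have := hle (t * w); lia) (t * w) rfl
  have hmul := reflLength_mul_le (x := t) (Submonoid.subset_closure ht)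
    (mem_closure_isReflection cs (t * w))
  rw [← mul_assoc, ht.mul_self, one_mul] at hmul
  have := reflLength_le_one (T := {t | cs.IsReflection t}) ht
  lia

lemma reflLength_mul_lt_of_reflLength_eq_card {w t : W}
    (hw : reflLength {t | cs.IsReflection t} w = Nat.card B) (ht : cs.IsReflection t) :
    reflLength {t | cs.IsReflection t} (t * w) < reflLength {t | cs.IsReflection t} w := by
  have := finite_of_coxeterSystem cs
  have hfix : (geometricRep cs w).fixedSubmodule = ⊥ := by
    have := reflLength_add_finrank_fixedSubmodule_le cs w
    exact Submodule.finrank_eq_zero.mp (by lia)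
  have hlt := Submodule.finrank_lt_finrank_of_lt
    (fixedSubmodule_lt_fixedSubmodule_isReflection_mul cs ht (hfix ▸ bot_le))
  have := reflLength_add_finrank_fixedSubmodule_le cs (t * w)
  lia

end Carter

theorem statement_6 {W : Type*} [Group W] [Finite W] (T : Set W) (n : ℕ)
    (hT : IsDualCoxeterSystemOfRank W T n)
    (w : W) (hw : reflLength T w = n) (t : W) (ht : t ∈ T) :
    reflLength T t + reflLength T (t⁻¹ * w) = reflLength T w ∧
    ∃ l : List W, IsRedFac T w (t :: l) := by
  obtain ⟨B, M, cs, rfl, rfl⟩ := hT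
  have hlt : reflLength {t | cs.IsReflection t} (t⁻¹ * w) <
      reflLength {t | cs.IsReflection t} w := by
    rw [ht.inv]
    exact reflLength_mul_lt_of_reflLength_eq_card cs hw ht
  have hmem := mem_closure_isReflection cs (t⁻¹ * w)
  obtain ⟨l, hl⟩ := exists_isRedFac hmem
  exact ⟨reflLength_add_reflLength_inv_mul ht hmem hlt, l, isRedFac_cons ht hl hlt⟩
end

section
/- Let (W,T) be a dual Coxeter system, let t_1,…,t_n, t ∈ T, and let x ∈ ⟨t_1,…,t_n⟩. Then the tuples (t_1,…,t_n, t, t) and (t_1,…,t_n, xtx⁻¹, xtx⁻¹) are Hurwitz equivalent. -/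
/-!
Moving a whole block `u` rightwards across a block `w` conjugates `w` by the product of `u`. So a
block `w` whose product `p` commutes with every entry of a tuple `l` slides freely through `l`. Let
`a` be an entry of `l`. Slide `w` leftwards until it stands just right of `a`, and move `a` across
it: `w` is now conjugated by `a` and stands just left of `a`, while its product is still `p`, so it
slides back to the end of `l`. Iterating, `w` may be conjugated by any element of the subgroup
generated by `l`. For an involution `r`, the block `(r, r)` has product `1`.
-/

theorem prod_map_conj_of_commute {G : Type*} [Group G] {x : G} {w : List G}
    (h : Commute x w.prod) : (w.map (MulAut.conj x)).prod = w.prod := by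
  rw [← map_list_prod]
  exact h.mul_inv_cancel

namespace HurwitzEquiv

variable {G : Type*} [Group G] {l l₁ l₂ l₃ w : List G}

protected theorem refl (l : List G) : HurwitzEquiv l l :=
  Relation.EqvGen.refl l

protected theorem symm (h : HurwitzEquiv l₁ l₂) : HurwitzEquiv l₂ l₁ :=
  Relation.EqvGen.symm _ _ h

protected theorem trans (h₁ : HurwitzEquiv l₁ l₂) (h₂ : HurwitzEquiv l₂ l₃) :
    HurwitzEquiv l₁ l₃ :=
  Relation.EqvGen.trans _ _ _ h₁ h₂

instance : Trans (HurwitzEquiv (G := G)) (HurwitzEquiv (G := G)) (HurwitzEquiv (G := G)) :=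
  ⟨HurwitzEquiv.trans⟩

theorem append_left (u : List G) (h : HurwitzEquiv l₁ l₂) :
    HurwitzEquiv (u ++ l₁) (u ++ l₂) := by
  induction h with
  | rel _ _ h =>
    obtain ⟨u', v, a, b, rfl, rfl⟩ := h
    exact .rel _ _ ⟨u ++ u', v, a, b, by simp, by simp⟩
  | refl => exact .refl _
  | symm _ _ _ ih => exact ih.symm
  | trans _ _ _ _ _ ih₁ ih₂ => exact ih₁.trans ih₂

theorem append_right (v : List G) (h : HurwitzEquiv l₁ l₂) :
    HurwitzEquiv (l₁ ++ v) (l₂ ++ v) := by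
  induction h with
  | rel _ _ h =>
    obtain ⟨u, v', a, b, rfl, rfl⟩ := h
    exact .rel _ _ ⟨u, v' ++ v, a, b, by simp, by simp⟩
  | refl => exact .refl _
  | symm _ _ _ ih => exact ih.symm
  | trans _ _ _ _ _ ih₁ ih₂ => exact ih₁.trans ih₂

theorem cons (a : G) (h : HurwitzEquiv l₁ l₂) : HurwitzEquiv (a :: l₁) (a :: l₂) :=
  h.append_left [a]

theorem cons_cons_conj (a b : G) (l : List G) :
    HurwitzEquiv (a :: b :: l) (MulAut.conj a b :: a :: l) :=
  .rel _ _ ⟨[], l, a, b, rfl, rfl⟩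

theorem cons_map_conj_append (a : G) (w : List G) :
    HurwitzEquiv (a :: w) (w.map (MulAut.conj a) ++ [a]) := by
  induction w with
  | nil => exact .refl _
  | cons b w ih => exact (cons_cons_conj a b w).trans (ih.cons _)

theorem append_map_conj_append (u w : List G) :
    HurwitzEquiv (u ++ w) (w.map (MulAut.conj u.prod) ++ u) := by
  induction u with
  | nil => simpa using HurwitzEquiv.refl w
  | cons a u ih =>
    calc
      HurwitzEquiv (a :: (u ++ w)) (a :: w.map (MulAut.conj u.prod) ++ u) := ih.cons a
      HurwitzEquiv _ ((w.map (MulAut.conj u.prod)).map (MulAut.conj a) ++ [a] ++ u) :=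
        (cons_map_conj_append a _).append_right u
      _ = w.map (MulAut.conj (a :: u).prod) ++ a :: u := by simp [Function.comp_def, mul_assoc]

theorem append_comm_of_commute (h : ∀ a ∈ l, Commute a w.prod) :
    HurwitzEquiv (w ++ l) (l ++ w) := by
  have h_conj : l.map (MulAut.conj w.prod) = l :=
    (List.map_congr_left fun a ha ↦ (h a ha).symm.mul_inv_cancel).trans (List.map_id l)
  simpa only [h_conj] using append_map_conj_append w l

theorem append_map_conj_of_mem {a : G} (ha : a ∈ l) (h : ∀ b ∈ l, Commute b w.prod) :
    HurwitzEquiv (l ++ w) (l ++ w.map (MulAut.conj a)) := by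
  have h_prod : (w.map (MulAut.conj a)).prod = w.prod := prod_map_conj_of_commute (h a ha)
  obtain ⟨u, v, rfl⟩ := List.append_of_mem ha
  have h_slide : HurwitzEquiv (a :: v ++ w) (a :: v ++ w.map (MulAut.conj a)) :=
    calc
      HurwitzEquiv (a :: (v ++ w)) (a :: w ++ v) :=
        (append_comm_of_commute fun b hb ↦ h b (by simp [hb])).symm.cons a
      HurwitzEquiv _ (w.map (MulAut.conj a) ++ [a] ++ v) :=
        (cons_map_conj_append a w).append_right v
      _ = w.map (MulAut.conj a) ++ a :: v := by simp
      HurwitzEquiv _ (a :: v ++ w.map (MulAut.conj a)) :=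
        append_comm_of_commute fun b hb ↦ h_prod ▸ h b (List.mem_append_right u hb)
  simpa only [List.append_assoc] using h_slide.append_left u

end HurwitzEquiv

theorem statement_7_general {G : Type*} [Group G] {l w : List G}
    (hw : ∀ a ∈ l, Commute a w.prod) {x : G} (hx : x ∈ Subgroup.closure {a | a ∈ l}) :
    HurwitzEquiv (l ++ w) (l ++ w.map (MulAut.conj x)) := by
  have h_prod {y : G} (hy : y ∈ Subgroup.closure {a | a ∈ l}) {v : List G}
      (hv : ∀ a ∈ l, Commute a v.prod) : (v.map (MulAut.conj y)).prod = v.prod :=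
    have h_comm : Commute v.prod y :=
      Subgroup.closure_le_centralizer_centralizer _ hy _ hv
    prod_map_conj_of_commute h_comm.symm
  induction hx using Subgroup.closure_induction generalizing w with
  | mem a ha => exact .append_map_conj_of_mem ha hw
  | one => simpa using HurwitzEquiv.refl (l ++ w)
  | mul x y _ hy ihx ihy =>
    have h := (ihy hw).trans (ihx (by rwa [h_prod hy hw]))
    simpa [Function.comp_def, mul_assoc] using h
  | inv x hx ih =>
    have h := ih (w := w.map (MulAut.conj x⁻¹)) (by rwa [h_prod (inv_mem hx) hw])
    simpa [Function.comp_def, mul_assoc] using h.symm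

theorem statement_7 {W : Type*} [Group W] (T : Set W) (hT : IsDualCoxeterSystem W T)
    (n : ℕ) (t : Fin n → W) (ht : ∀ i, t i ∈ T) (r : W) (hr : r ∈ T)
    (x : W) (hx : x ∈ Subgroup.closure (Set.range t)) :
    HurwitzEquiv (List.ofFn t ++ [r, r])
      (List.ofFn t ++ [x * r * x⁻¹, x * r * x⁻¹]) := by
  obtain ⟨_, _, _, rfl⟩ := hT
  have hr_sq : r * r = 1 := CoxeterSystem.IsReflection.mul_self hr
  simpa using statement_7_general (l := List.ofFn t) (w := [r, r]) (by simp [hr_sq])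
    (by simpa [Set.range] using hx)
end
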